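/- (Lemma: B is an orthonormal basis for symmetric matrices) For every positive integer m, every real symmetric matrix R ∈ ℝ^{2^m × 2^m} can be expanded as R = Σ_{(a,b) ∈ Y₂^m} 2^{-m} Tr[R · D(a,b)] · D(a,b), where the sum runs over all pairs (a,b) ∈ Y₂^m. -/

import Mathlib

open Matrix

/-- Mod-2 inner product of binary tuples. -/
def bip {I : Type*} [Fintype I] (a b : I → ZMod 2) : ZMod 2 := ∑ i, a i * b i

/-- The sign `(-1)^ε` for `ε ∈ ℤ/2`: `1` if `ε = 0`, `-1` if `ε = 1`. -/
noncomputable def sgn (x : ZMod 2) : ℝ := (-1 : ℝ) ^ x.val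

/-- The binary Heisenberg-Weyl signed permutation matrix `D(a,b)`
(equivalently the iterated Kronecker product of the `X^{a_i} Z^{b_i}`), with entries
`D(a,b)_{u,v} = (-1)^{b·v}` if `u = v + a` and `0` otherwise. -/
noncomputable def Dmat {I : Type*} [Fintype I] [DecidableEq I] (a b : I → ZMod 2) :
    Matrix (I → ZMod 2) (I → ZMod 2) ℝ :=
  Matrix.of fun u v => if u = v + a then sgn (bip b v) else 0

lemma zmod2_cases (x : ZMod 2) : x = 0 ∨ x = 1 := by
  revert x; decide

lemma sgn_zero' : sgn 0 = 1 := by simp [sgn]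

lemma sgn_one' : sgn 1 = -1 := by simp [sgn, ZMod.val_one]

lemma sgn_add (x y : ZMod 2) : sgn (x + y) = sgn x * sgn y := by
  rcases zmod2_cases x with rfl | rfl <;> rcases zmod2_cases y with rfl | rfl <;>
    simp [sgn_zero', sgn_one', CharTwo.add_self_eq_zero]

lemma sgn_sum {I : Type*} (s : Finset I) (f : I → ZMod 2) :
    sgn (∑ i ∈ s, f i) = ∏ i ∈ s, sgn (f i) := by
  classical
  induction s using Finset.induction_on with
  | empty => simp [sgn_zero']
  | insert a s ha ih => rw [Finset.sum_insert ha, Finset.prod_insert ha, sgn_add, ih]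

lemma bip_add {I : Type*} [Fintype I] (b u v : I → ZMod 2) :
    bip b (u + v) = bip b u + bip b v := by
  simp [bip, mul_add, Finset.sum_add_distrib]

lemma bip_comm' {I : Type*} [Fintype I] (a b : I → ZMod 2) : bip a b = bip b a := by
  simp [bip, mul_comm]

lemma tup_add_self {I : Type*} (a : I → ZMod 2) : a + a = 0 := by
  funext i
  exact CharTwo.add_self_eq_zero (a i)

lemma sum_sgn_bip {m : ℕ} (w : Fin m → ZMod 2) :
    ∑ b : Fin m → ZMod 2, sgn (bip b w) = if w = 0 then (2 : ℝ) ^ m else 0 := by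
  have h1 : ∀ c : ZMod 2, ∑ x : ZMod 2, sgn (x * c) = if c = 0 then (2 : ℝ) else 0 := by
    intro c
    have h2 : ∀ f : ZMod 2 → ℝ, ∑ x, f x = f 0 + f 1 := fun f => Fin.sum_univ_two f
    rw [h2]
    rcases zmod2_cases c with rfl | rfl
    · norm_num [sgn_zero']
    · norm_num [sgn_zero', sgn_one']
  simp only [bip, sgn_sum]
  have h3 := Finset.prod_univ_sum (fun _ : Fin m => (Finset.univ : Finset (ZMod 2)))
    (fun i x => sgn (x * w i))
  rw [Fintype.piFinset_univ] at h3
  rw [← h3]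
  simp only [h1]
  split_ifs with hw
  · subst hw; simp
  · obtain ⟨i, hi⟩ := Function.ne_iff.mp hw
    exact Finset.prod_eq_zero (Finset.mem_univ i) (if_neg hi)

lemma trace_Dmat {m : ℕ} (R : Matrix (Fin m → ZMod 2) (Fin m → ZMod 2) ℝ)
    (a b : Fin m → ZMod 2) :
    Matrix.trace (R * Dmat a b) = ∑ u, R u (u + a) * sgn (bip b u) := by
  simp [Matrix.trace, Matrix.mul_apply, Dmat]

lemma trace_Dmat_zero {m : ℕ} (R : Matrix (Fin m → ZMod 2) (Fin m → ZMod 2) ℝ)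
    (hR : Rᵀ = R) (a b : Fin m → ZMod 2) (h : bip a b ≠ 0) :
    Matrix.trace (R * Dmat a b) = 0 := by
  have h1 : bip b a = 1 := by
    rw [bip_comm']
    exact (zmod2_cases _).resolve_left h
  rw [trace_Dmat]
  have h2 := (Equiv.sum_comp (Equiv.addRight a) (fun u => R u (u + a) * sgn (bip b u)))
  have h3 : ∀ u, R (u + a) (u + a + a) * sgn (bip b (u + a)) = -(R u (u + a) * sgn (bip b u)) := by
    intro u
    rw [add_assoc, tup_add_self, add_zero, bip_add, sgn_add, h1, sgn_one']
    have : R (u + a) u = R u (u + a) := congrFun (congrFun hR u) (u + a)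
    rw [this]; ring
  simp only [Equiv.coe_addRight, h3, Finset.sum_neg_distrib] at h2
  linarith

/-- Expansion of a symmetric matrix in the orthonormal basis
`{2^{-m/2} D(a,b) : (a,b) ∈ Y₂^m}`. -/
theorem weyl_sym_expansion {m : ℕ} (hm : 0 < m)
    (R : Matrix (Fin m → ZMod 2) (Fin m → ZMod 2) ℝ) (hR : Rᵀ = R) :
    R = ∑ p ∈ Finset.univ.filter
        (fun p : (Fin m → ZMod 2) × (Fin m → ZMod 2) => bip p.1 p.2 = 0),
      (Matrix.trace (R * Dmat p.1 p.2) / 2 ^ m) • Dmat p.1 p.2 := by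
  rw [Finset.sum_filter_of_ne]
  swap
  · intro p _ hp
    by_contra h
    exact hp (by rw [trace_Dmat_zero R hR _ _ h]; simp)
  ext x y
  rw [Matrix.sum_apply, Fintype.sum_prod_type]
  have hy : ∀ u : Fin m → ZMod 2, u + y = 0 ↔ u = y := by
    intro u
    constructor
    · intro h
      calc u = u + (y + y) := by rw [tup_add_self, add_zero]
        _ = y := by rw [← add_assoc, h, zero_add]
    · rintro rfl
      exact tup_add_self u
  have hxy : y + (x + y) = x := by
    rw [add_comm x y, ← add_assoc, tup_add_self, zero_add]
  rw [Finset.sum_eq_single (x + y)]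
  · have h1 : ∀ b : Fin m → ZMod 2,
        ((Matrix.trace (R * Dmat (x + y) b) / 2 ^ m) • Dmat (x + y) b) x y =
        ∑ u, (R u (u + (x + y)) / 2 ^ m) * sgn (bip b (u + y)) := by
      intro b
      rw [Matrix.smul_apply, smul_eq_mul, trace_Dmat]
      simp only [Dmat, Matrix.of_apply, hxy, if_true]
      rw [Finset.sum_div, Finset.sum_mul]
      refine Finset.sum_congr rfl fun u _ => ?_
      rw [bip_add, sgn_add]; ring
    simp only [h1]
    rw [Finset.sum_comm]
    simp only [← Finset.mul_sum, sum_sgn_bip, hy]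
    simp only [mul_ite, mul_zero, Finset.sum_ite_eq', Finset.mem_univ, if_true, hxy]
    rw [div_mul_cancel₀ _ (by positivity)]
    exact (congrFun (congrFun hR x) y).symm
  · intro a _ ha
    refine Finset.sum_eq_zero fun b _ => ?_
    have : x ≠ y + a := by
      rintro rfl
      apply ha
      rw [add_comm y a, add_assoc, tup_add_self, add_zero]
    simp [Dmat, this]
  · intro h
    exact absurd (Finset.mem_univ _) h
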